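/- Fix Δ ∈ (1,2) and an integer t ≥ 1. Then the Blackwell-inspired strategy defined below satisfies, for every sequence q_1,…,q_t of probability vectors in Δ_2, ‖φ̄_t‖_∞ ≤ Δ + √(2/t)·Δ²/(Δ−1), where φ̄_t = (1/t)·Σ_{i=1}^t f(r_i, q_i); equivalently, the accumulated loss satisfies max{ Σ_{i=1}^t q_i(0)/r_i(0) , Σ_{i=1}^t q_i(1)/r_i(1) } ≤ t·Δ + √(2t)·Δ²/(Δ−1). -/

import Mathlib

/-!
Write `s = Δ - 1` and recentre at `(1,1)`: `y i = phibar i - (1,1)`. The region `S`, without the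
sign constraints, becomes the convex cone `C = {Q : s Q₁ + Q₂ ≤ 0, Q₁ + s Q₂ ≤ 0}`. The proof is
Blackwell's approachability argument for `C`.

* The odds `r` selected at `y` are, up to a factor `c ≥ 0`, the residual of the projection of `y` on
  `C`: `y = c r + P` with `P ∈ C`, `c ⟨r, P⟩ = 0`, and `⟨r, Q⟩ ≤ 0` for all `Q ∈ C`
  (Moreau decomposition, `select_moreau`). Moreover both odds are at least `s / Δ`.
* The increment `g = floss r q - (1,1)` is orthogonal to `r`, and `‖g‖² ≤ (1 + s²) / s²`
  (`increment_bounds`).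

Since `C` is a cone, Pythagoras shows that the squared distance from `i • y i` to `C` grows by at
most `(1 + s²) / s²` per round (`approach_invariant`). Finally, a point at distance `d` from `C`
satisfies `s y₁ + y₂ ≤ √(1 + s²) d`, and `y₁ ≥ -1`, so `phibar` exceeds `Δ = 1 + s` by at most
`√(1 + s²) d` in the second coordinate; symmetrically for the first.
-/

open scoped Classical

noncomputable section

/-- The loss vector `f(r,q) = (q(0)/r(0), q(1)/r(1))`. -/
def floss (r q : ℝ × ℝ) : ℝ × ℝ := (q.1 / r.1, q.2 / r.2)

def lam1 (Δ : ℝ) : ℝ × ℝ := (1 - 1 / Δ, 1 / Δ)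
def lam1p (Δ : ℝ) : ℝ × ℝ := (1, 1 - Δ)
def lam2 (Δ : ℝ) : ℝ × ℝ := (1 / Δ, 1 - 1 / Δ)
def lam2p (Δ : ℝ) : ℝ × ℝ := (1 - Δ, 1)

/-- Euclidean inner product on `ℝ²`. -/
def dot (a b : ℝ × ℝ) : ℝ := a.1 * b.1 + a.2 * b.2

/-- `A1 = {x ∈ [0,∞)² : ⟨x−(1,1), λ1⟩ > 0, ⟨x−(1,1), λ1⊥⟩ ≤ 0}`. -/
def inA1 (Δ : ℝ) (x : ℝ × ℝ) : Prop :=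
  0 ≤ x.1 ∧ 0 ≤ x.2 ∧ 0 < dot (x - (1, 1)) (lam1 Δ) ∧ dot (x - (1, 1)) (lam1p Δ) ≤ 0

/-- `A2 = {x ∈ [0,∞)² : ⟨x−(1,1), λ2⟩ > 0, ⟨x−(1,1), λ2⊥⟩ ≤ 0}`. -/
def inA2 (Δ : ℝ) (x : ℝ × ℝ) : Prop :=
  0 ≤ x.1 ∧ 0 ≤ x.2 ∧ 0 < dot (x - (1, 1)) (lam2 Δ) ∧ dot (x - (1, 1)) (lam2p Δ) ≤ 0

/-- `A3 = {x ∈ [0,∞)² : ⟨x−(1,1), λ1⊥⟩ > 0, ⟨x−(1,1), λ2⊥⟩ > 0}`. -/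
def inA3 (Δ : ℝ) (x : ℝ × ℝ) : Prop :=
  0 ≤ x.1 ∧ 0 ≤ x.2 ∧ 0 < dot (x - (1, 1)) (lam1p Δ) ∧ 0 < dot (x - (1, 1)) (lam2p Δ)

/-- The Blackwell-inspired update rule: the odds played when the current average
loss vector is `x`. -/
def select (Δ : ℝ) (x : ℝ × ℝ) : ℝ × ℝ :=
  if inA1 Δ x then lam1 Δ
  else if inA2 Δ x then lam2 Δ
  else if inA3 Δ x then (1 / (|x.1 - 1| + |x.2 - 1|)) • (x - (1, 1))
  else (1 / 2, 1 / 2)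

/-- The average loss vector `φ̄_i` of the Blackwell-inspired strategy, where `q j`
(0-indexed) is the gambler's play in round `j+1`:  `φ̄_0 = (0,0)` and
`φ̄_{i+1} = (1/(i+1))·(i·φ̄_i + f(select(φ̄_i), q_{i+1}))`. -/
def phibar (Δ : ℝ) (q : ℕ → ℝ × ℝ) : ℕ → ℝ × ℝ
  | 0 => (0, 0)
  | i + 1 => ((i : ℝ) / (i + 1)) • phibar Δ q i +
      ((1 : ℝ) / (i + 1)) • floss (select Δ (phibar Δ q i)) (q i)

end

/-- Moreau decomposition of `x - (1,1)` with respect to the cone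
`{Q : (Δ-1) Q₁ + Q₂ ≤ 0, Q₁ + (Δ-1) Q₂ ≤ 0}`: the residual is a nonnegative multiple of the selected
odds. -/
theorem select_moreau (Δ : ℝ) (h1 : 1 < Δ) (h2 : Δ < 2) (x : ℝ × ℝ) (hx1 : 0 ≤ x.1)
    (hx2 : 0 ≤ x.2) :
    (Δ - 1) / Δ ≤ (select Δ x).1 ∧ (Δ - 1) / Δ ≤ (select Δ x).2 ∧
    (select Δ x).1 + (select Δ x).2 = 1 ∧
    (∀ u v : ℝ, (Δ - 1) * u + v ≤ 0 → u + (Δ - 1) * v ≤ 0 →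
      (select Δ x).1 * u + (select Δ x).2 * v ≤ 0) ∧
    ∃ c p₁ p₂ : ℝ, 0 ≤ c ∧ x.1 - 1 = c * (select Δ x).1 + p₁ ∧
      x.2 - 1 = c * (select Δ x).2 + p₂ ∧ (Δ - 1) * p₁ + p₂ ≤ 0 ∧ p₁ + (Δ - 1) * p₂ ≤ 0 ∧
      c * ((select Δ x).1 * p₁ + (select Δ x).2 * p₂) = 0 := by
  obtain ⟨s, rfl⟩ : ∃ s, Δ = 1 + s := ⟨Δ - 1, by ring⟩
  obtain ⟨y, rfl⟩ : ∃ y : ℝ × ℝ, x = (1 + y.1, 1 + y.2) :=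
    ⟨(x.1 - 1, x.2 - 1), by ext <;> simp⟩
  obtain ⟨a, b⟩ := y
  have hs0 : 0 < s := by linarith
  have hs1 : s < 1 := by linarith
  have hΔ0 : (0 : ℝ) < 1 + s := by linarith
  have hn : (0 : ℝ) < 1 + s ^ 2 := by positivity
  have hss : s / (1 + s) ≤ 1 / (1 + s) := by gcongr
  have e1 : 1 - 1 / (1 + s) = s / (1 + s) := by field_simp; ring
  have posl : ∀ w : ℝ, 0 < w / (1 + s) ↔ 0 < w := fun w => by
    constructor
    · intro h; have := mul_pos h hΔ0; rwa [div_mul_cancel₀ _ hΔ0.ne'] at this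
    · intro h; positivity
  have d1 : s / (1 + s) * a + 1 / (1 + s) * b = (s * a + b) / (1 + s) := by ring
  have d2 : 1 / (1 + s) * a + s / (1 + s) * b = (a + s * b) / (1 + s) := by ring
  -- The four regions in terms of the coordinates `a`, `b` of `x - (1,1)`.
  have i1 : inA1 (1 + s) (1 + a, 1 + b) ↔ 0 < s * a + b ∧ a ≤ s * b := by
    simp only [inA1, dot, lam1, lam1p, e1, Prod.fst_sub, Prod.snd_sub, add_sub_cancel_left]
    simp only at hx1 hx2
    rw [mul_comm a, mul_comm b, d1, posl]
    constructor
    · rintro ⟨_, _, h, h'⟩; exact ⟨h, by linarith⟩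
    · rintro ⟨h, h'⟩; exact ⟨hx1, hx2, h, by linarith⟩
  have i2 : inA2 (1 + s) (1 + a, 1 + b) ↔ 0 < a + s * b ∧ b ≤ s * a := by
    simp only [inA2, dot, lam2, lam2p, e1, Prod.fst_sub, Prod.snd_sub, add_sub_cancel_left]
    simp only at hx1 hx2
    rw [mul_comm a, mul_comm b, d2, posl]
    constructor
    · rintro ⟨_, _, h, h'⟩; exact ⟨h, by linarith⟩
    · rintro ⟨h, h'⟩; exact ⟨hx1, hx2, h, by linarith⟩
  have i3 : inA3 (1 + s) (1 + a, 1 + b) ↔ s * b < a ∧ s * a < b := by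
    simp only [inA3, dot, lam1p, lam2p, Prod.fst_sub, Prod.snd_sub, add_sub_cancel_left]
    simp only at hx1 hx2
    constructor
    · rintro ⟨_, _, h, h'⟩; exact ⟨by linarith, by linarith⟩
    · rintro ⟨h, h'⟩; exact ⟨hx1, hx2, by linarith, by linarith⟩
  simp only [add_sub_cancel_left]
  by_cases H1 : inA1 (1 + s) (1 + a, 1 + b)
  · have hr : select (1 + s) (1 + a, 1 + b) = (s / (1 + s), 1 / (1 + s)) := by
      simp only [select, if_pos H1, lam1, e1]
    obtain ⟨hA, hB⟩ := i1.1 H1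
    rw [hr]
    refine ⟨le_rfl, hss, by field_simp; ring, ?_, ?_⟩
    · intro u v hu _
      have : s / (1 + s) * u + 1 / (1 + s) * v = (s * u + v) / (1 + s) := by ring
      simp only [this]
      exact div_nonpos_of_nonpos_of_nonneg hu hΔ0.le
    · -- Orthogonal projection on the boundary line `s p₁ + p₂ = 0`.
      refine ⟨(s * a + b) * (1 + s) / (1 + s ^ 2), (a - s * b) / (1 + s ^ 2),
        -s * ((a - s * b) / (1 + s ^ 2)), by positivity, ?_, ?_, ?_, ?_, ?_⟩
      · field_simp; ring
      · field_simp; ring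
      · apply le_of_eq; ring
      · have h := mul_nonpos_of_nonneg_of_nonpos (by nlinarith : 0 ≤ 1 - s ^ 2)
          (div_nonpos_of_nonpos_of_nonneg (by linarith) hn.le : (a - s * b) / (1 + s ^ 2) ≤ 0)
        linarith
      · simp only; ring
  by_cases H2 : inA2 (1 + s) (1 + a, 1 + b)
  · have hr : select (1 + s) (1 + a, 1 + b) = (1 / (1 + s), s / (1 + s)) := by
      simp only [select, if_neg H1, if_pos H2, lam2, e1]
    obtain ⟨hA, hB⟩ := i2.1 H2
    rw [hr]
    refine ⟨hss, le_rfl, by field_simp, ?_, ?_⟩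
    · intro u v _ hu
      have : 1 / (1 + s) * u + s / (1 + s) * v = (u + s * v) / (1 + s) := by ring
      simp only [this]
      exact div_nonpos_of_nonpos_of_nonneg hu hΔ0.le
    · -- Orthogonal projection on the boundary line `p₁ + s p₂ = 0`.
      refine ⟨(a + s * b) * (1 + s) / (1 + s ^ 2), -s * ((b - s * a) / (1 + s ^ 2)),
        (b - s * a) / (1 + s ^ 2), by positivity, ?_, ?_, ?_, ?_, ?_⟩
      · field_simp; ring
      · field_simp; ring
      · have h := mul_nonpos_of_nonneg_of_nonpos (by nlinarith : 0 ≤ 1 - s ^ 2)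
          (div_nonpos_of_nonpos_of_nonneg (by linarith) hn.le : (b - s * a) / (1 + s ^ 2) ≤ 0)
        linarith
      · apply le_of_eq; ring
      · simp only; ring
  by_cases H3 : inA3 (1 + s) (1 + a, 1 + b)
  · obtain ⟨hA, hB⟩ := i3.1 H3
    have h1s : 0 < 1 - s ^ 2 := by nlinarith
    have ha : 0 < a := by
      have := mul_lt_mul_of_pos_left hB hs0
      exact pos_of_mul_pos_right (by nlinarith : 0 < (1 - s ^ 2) * a) h1s.le
    have hb : 0 < b := by
      have := mul_lt_mul_of_pos_left hA hs0
      exact pos_of_mul_pos_right (by nlinarith : 0 < (1 - s ^ 2) * b) h1s.le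
    have hr : select (1 + s) (1 + a, 1 + b) = (a / (a + b), b / (a + b)) := by
      simp only [select, if_neg H1, if_neg H2, if_pos H3, add_sub_cancel_left, abs_of_pos ha,
        abs_of_pos hb]
      ext <;> simp <;> ring
    rw [hr]
    have hab : 0 < a + b := by linarith
    refine ⟨?_, ?_, by field_simp, ?_, ?_⟩
    · simp only; rw [div_le_div_iff₀ hΔ0 hab]; nlinarith
    · simp only; rw [div_le_div_iff₀ hΔ0 hab]; nlinarith
    · intro u v hu hv
      have h : a * u + b * v ≤ 0 := by
        -- `(1 - s²) (a, b) = (b - s a) (s, 1) + (a - s b) (1, s)` has nonnegative coefficients.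
        have hm : (1 - s ^ 2) * (a * u + b * v) ≤ 0 := by
          have k1 := mul_nonpos_of_nonneg_of_nonpos (sub_nonneg.2 hB.le) hu
          have k2 := mul_nonpos_of_nonneg_of_nonpos (sub_nonneg.2 hA.le) hv
          linarith
        by_contra! hc
        nlinarith
      have : a / (a + b) * u + b / (a + b) * v = (a * u + b * v) / (a + b) := by ring
      simp only [this]
      exact div_nonpos_of_nonpos_of_nonneg h hab.le
    · refine ⟨a + b, 0, 0, hab.le, ?_, ?_, by simp, by simp, by simp⟩
      · field_simp; simp
      · field_simp; simp
  · have hr : select (1 + s) (1 + a, 1 + b) = (1 / 2, 1 / 2) := by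
      simp only [select, if_neg H1, if_neg H2, if_neg H3]
    rw [hr]
    have hle : s / (1 + s) ≤ 1 / 2 := by rw [div_le_div_iff₀ hΔ0 two_pos]; linarith
    refine ⟨hle, hle, by norm_num, ?_, 0, a, b, le_rfl, by simp, by simp, ?_, ?_, by simp⟩
    · intro u v hu hv
      simp only at hu hv ⊢
      nlinarith
    -- A point in none of the three regions lies in the cone.
    · rw [i1] at H1; rw [i2] at H2; rw [i3] at H3
      by_contra! hc
      have k1 : s * b < a := by by_contra! h; exact H1 ⟨hc, h⟩
      have k2 : b ≤ s * a := by by_contra! h; exact H3 ⟨k1, h⟩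
      have k3 : a + s * b ≤ 0 := by by_contra! h; exact H2 ⟨h, k2⟩
      nlinarith
    · rw [i1] at H1; rw [i2] at H2; rw [i3] at H3
      by_contra! hc
      have k1 : s * a < b := by by_contra! h; exact H2 ⟨hc, h⟩
      have k2 : a ≤ s * b := by by_contra! h; exact H3 ⟨h, k1⟩
      have k3 : s * a + b ≤ 0 := by by_contra! h; exact H1 ⟨h, k2⟩
      nlinarith

/-- The centred loss is orthogonal to the odds, and its squared norm is at most `1 + 1/s²`, the value
at a vertex of the segment of possible losses for the most extreme odds. -/
theorem increment_bounds (s : ℝ) (hs0 : 0 < s) (r q : ℝ × ℝ)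
    (hr1 : s / (1 + s) ≤ r.1) (hr2 : s / (1 + s) ≤ r.2) (hr : r.1 + r.2 = 1)
    (hq1 : 0 ≤ q.1) (hq2 : 0 ≤ q.2) (hq : q.1 + q.2 = 1) :
    r.1 * (q.1 / r.1 - 1) + r.2 * (q.2 / r.2 - 1) = 0 ∧
    (q.1 / r.1 - 1) ^ 2 + (q.2 / r.2 - 1) ^ 2 ≤ (1 + s ^ 2) / s ^ 2 := by
  obtain ⟨r1, r2⟩ := r
  obtain ⟨q1, q2⟩ := q
  simp only at *
  have hpos : 0 < s / (1 + s) := by positivity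
  have p1 : 0 < r1 := lt_of_lt_of_le hpos hr1
  have p2 : 0 < r2 := lt_of_lt_of_le hpos hr2
  refine ⟨by field_simp; linarith, ?_⟩
  have inv : ∀ r : ℝ, 0 < r → s / (1 + s) ≤ r → 1 / r - 1 ≤ 1 / s := fun r h h' => by
    have : 1 / r ≤ 1 / (s / (1 + s)) := one_div_le_one_div_of_le hpos h'
    have e : 1 / (s / (1 + s)) = 1 / s + 1 := by field_simp
    linarith
  have m1 := inv r1 p1 hr1
  have m2 := inv r2 p2 hr2
  have n1 : 0 ≤ 1 / r1 - 1 := by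
    rw [sub_nonneg, le_div_iff₀ p1]; linarith
  have n2 : 0 ≤ 1 / r2 - 1 := by
    rw [sub_nonneg, le_div_iff₀ p2]; linarith
  have e : (1 + s ^ 2) / s ^ 2 = 1 + (1 / s) ^ 2 := by field_simp; ring
  have g1 : q1 / r1 - 1 = q1 * (1 / r1 - 1) - q2 := by
    have : q2 = 1 - q1 := by linarith
    rw [this]; ring
  have g2 : q2 / r2 - 1 = q2 * (1 / r2 - 1) - q1 := by
    have : q1 = 1 - q2 := by linarith
    rw [this]; ring
  rw [e, g1, g2]
  generalize 1 / r1 - 1 = A at *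
  generalize 1 / r2 - 1 = B at *
  have sA : A ^ 2 ≤ (1 / s) ^ 2 := by gcongr
  have sB : B ^ 2 ≤ (1 / s) ^ 2 := by gcongr
  -- Convexity of the squared norm along the segment from `(A, -1)` to `(-1, B)`.
  have key : (q1 * A - q2) ^ 2 + (q2 * B - q1) ^ 2 ≤ q1 * (A ^ 2 + 1) + q2 * (1 + B ^ 2) := by
    have : q1 * (A ^ 2 + 1) + q2 * (1 + B ^ 2) - ((q1 * A - q2) ^ 2 + (q2 * B - q1) ^ 2)
        = q1 * q2 * ((A + 1) ^ 2 + (B + 1) ^ 2) := by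
      have : q2 = 1 - q1 := by linarith
      rw [this]; ring
    have : 0 ≤ q1 * q2 * ((A + 1) ^ 2 + (B + 1) ^ 2) := by positivity
    linarith
  have k1 := mul_le_mul_of_nonneg_left sA hq1
  have k2 := mul_le_mul_of_nonneg_left sB hq2
  have k3 : (q1 + q2) * (1 / s) ^ 2 = (1 / s) ^ 2 := by rw [hq, one_mul]
  linarith

theorem succ_mul_phibar (Δ : ℝ) (q : ℕ → ℝ × ℝ) (i : ℕ) :
    ((i : ℝ) + 1) * (phibar Δ q (i + 1)).1 =
      i * (phibar Δ q i).1 + (q i).1 / (select Δ (phibar Δ q i)).1 ∧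
    ((i : ℝ) + 1) * (phibar Δ q (i + 1)).2 =
      i * (phibar Δ q i).2 + (q i).2 / (select Δ (phibar Δ q i)).2 := by
  have h : (i : ℝ) + 1 ≠ 0 := by positivity
  constructor <;> simp only [phibar, floss, Prod.fst_add, Prod.snd_add, Prod.smul_fst,
    Prod.smul_snd, smul_eq_mul] <;> field_simp

theorem mul_phibar_eq_sum (Δ : ℝ) (q : ℕ → ℝ × ℝ) (t : ℕ) :
    (∑ i : Fin t, (q i.1).1 / (select Δ (phibar Δ q i.1)).1) = t * (phibar Δ q t).1 ∧
    (∑ i : Fin t, (q i.1).2 / (select Δ (phibar Δ q i.1)).2) = t * (phibar Δ q t).2 := by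
  induction t with
  | zero => simp
  | succ n ih =>
    have := succ_mul_phibar Δ q n
    rw [Fin.sum_univ_castSucc, Fin.sum_univ_castSucc]
    simp only [Fin.val_castSucc, Fin.val_last, ih.1, ih.2]
    push_cast
    exact ⟨this.1.symm, this.2.symm⟩

/-- Blackwell's estimate: the squared distance of `t • (phibar t - (1,1))` to the cone is at most
`t (1 + s²) / s²`, where `s = Δ - 1`. The distance is bounded through some point `t • (u, v)` of the
cone, not necessarily the nearest one. -/
theorem approach_invariant (Δ : ℝ) (h1 : 1 < Δ) (h2 : Δ < 2) (q : ℕ → ℝ × ℝ)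
    (hq : ∀ i, 0 ≤ (q i).1 ∧ 0 ≤ (q i).2 ∧ (q i).1 + (q i).2 = 1) (t : ℕ) :
    0 ≤ (phibar Δ q t).1 ∧ 0 ≤ (phibar Δ q t).2 ∧
    ∃ u v : ℝ, (Δ - 1) * u + v ≤ 0 ∧ u + (Δ - 1) * v ≤ 0 ∧
      (t : ℝ) ^ 2 * (((phibar Δ q t).1 - 1 - u) ^ 2 + ((phibar Δ q t).2 - 1 - v) ^ 2) ≤
        t * ((1 + (Δ - 1) ^ 2) / (Δ - 1) ^ 2) := by
  induction t with
  | zero => exact ⟨le_rfl, le_rfl, 0, 0, by simp, by simp, by simp⟩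
  | succ n ih =>
    obtain ⟨x1, x2, u, v, hu, hv, hd⟩ := ih
    obtain ⟨rl1, rl2, hr, hpol, c, p1, p2, hc, hy1, hy2, hP1, hP2, horth⟩ :=
      select_moreau Δ h1 h2 (phibar Δ q n) x1 x2
    obtain ⟨q1, q2, hq12⟩ := hq n
    obtain ⟨hg, hgn⟩ := increment_bounds (Δ - 1) (by linarith) (select Δ (phibar Δ q n)) (q n)
      (by simpa using rl1) (by simpa using rl2) hr q1 q2 hq12
    obtain ⟨f1, f2⟩ := succ_mul_phibar Δ q n
    have hpol' := hpol u v hu hv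
    have hl : 0 < (Δ - 1) / Δ := div_pos (by linarith) (by linarith)
    have rp1 := hl.trans_le rl1
    have rp2 := hl.trans_le rl2
    have hn : (0 : ℝ) ≤ n := Nat.cast_nonneg n
    have hn1 : (0 : ℝ) < (n : ℝ) + 1 := by positivity
    have hρ : 0 ≤ (n : ℝ) / (n + 1) := by positivity
    refine ⟨?_, ?_, n / (n + 1) * p1, n / (n + 1) * p2, ?_, ?_, ?_⟩
    · have : 0 ≤ ((n : ℝ) + 1) * (phibar Δ q (n + 1)).1 := by rw [f1]; positivity
      exact nonneg_of_mul_nonneg_right this hn1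
    · have : 0 ≤ ((n : ℝ) + 1) * (phibar Δ q (n + 1)).2 := by rw [f2]; positivity
      exact nonneg_of_mul_nonneg_right this hn1
    · have := mul_nonpos_of_nonneg_of_nonpos hρ hP1
      linarith
    · have := mul_nonpos_of_nonneg_of_nonpos hρ hP2
      linarith
    · generalize select Δ (phibar Δ q n) = r at *
      generalize (q n).1 / r.1 = l1 at *
      generalize (q n).2 / r.2 = l2 at *
      push_cast
      have z1 : ((n : ℝ) + 1) * ((phibar Δ q (n + 1)).1 - 1 - n / (n + 1) * p1) =
          n * (c * r.1) + (l1 - 1) := by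
        have : ((n : ℝ) + 1) * (n / (n + 1) * p1) = n * p1 := by field_simp
        linear_combination f1 - this + n * hy1
      have z2 : ((n : ℝ) + 1) * ((phibar Δ q (n + 1)).2 - 1 - n / (n + 1) * p2) =
          n * (c * r.2) + (l2 - 1) := by
        have : ((n : ℝ) + 1) * (n / (n + 1) * p2) = n * p2 := by field_simp
        linear_combination f2 - this + n * hy2
      rw [mul_add, ← mul_pow, ← mul_pow, z1, z2]
      -- The residual `c r` is no longer than the distance to any point `(u, v)` of the cone.
      have hmin : (c * r.1) ^ 2 + (c * r.2) ^ 2 ≤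
          ((phibar Δ q n).1 - 1 - u) ^ 2 + ((phibar Δ q n).2 - 1 - v) ^ 2 := by
        rw [hy1, hy2]
        have := mul_nonpos_of_nonneg_of_nonpos hc hpol'
        nlinarith [sq_nonneg (p1 - u), sq_nonneg (p2 - v)]
      have hm := mul_le_mul_of_nonneg_left hmin (sq_nonneg (n : ℝ))
      have hexp : (n * (c * r.1) + (l1 - 1)) ^ 2 + (n * (c * r.2) + (l2 - 1)) ^ 2 =
          (n : ℝ) ^ 2 * ((c * r.1) ^ 2 + (c * r.2) ^ 2) + ((l1 - 1) ^ 2 + (l2 - 1) ^ 2) := by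
        linear_combination 2 * n * c * hg
      rw [hexp]
      linarith

/-- A point close to the half-plane `s Q₁ + Q₂ ≤ 0`, with first coordinate at least `-1`, has second
coordinate at most `s` plus an error, by Cauchy–Schwarz. -/
theorem coord_le (s T a b u v : ℝ) (hs : 0 < s) (hT : 0 < T) (ha : -1 ≤ a)
    (hu : s * u + v ≤ 0)
    (hd : T ^ 2 * ((a - u) ^ 2 + (b - v) ^ 2) ≤ T * ((1 + s ^ 2) / s ^ 2)) :
    b ≤ s + Real.sqrt (2 / T) * ((1 + s) ^ 2 / s) := by
  set E := Real.sqrt (2 / T) * ((1 + s) ^ 2 / s) with hE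
  have hE0 : 0 ≤ E := by positivity
  have hE2 : E ^ 2 = 2 / T * ((1 + s) ^ 2 / s) ^ 2 := by
    rw [hE, mul_pow, Real.sq_sqrt (by positivity)]
  have hd' : (a - u) ^ 2 + (b - v) ^ 2 ≤ (1 + s ^ 2) / s ^ 2 / T := by
    rw [le_div_iff₀ hT]
    have : T * (T * ((a - u) ^ 2 + (b - v) ^ 2)) ≤ T * ((1 + s ^ 2) / s ^ 2) := by
      linarith
    linarith [le_of_mul_le_mul_left this hT]
  have hcs : (s * (a - u) + (b - v)) ^ 2 ≤ E ^ 2 := by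
    calc (s * (a - u) + (b - v)) ^ 2 ≤ (1 + s ^ 2) * ((a - u) ^ 2 + (b - v) ^ 2) := by
          nlinarith [sq_nonneg ((a - u) - s * (b - v))]
      _ ≤ (1 + s ^ 2) * ((1 + s ^ 2) / s ^ 2 / T) := by gcongr
      _ = 1 / T * ((1 + s ^ 2) / s) ^ 2 := by field_simp
      _ ≤ 2 / T * ((1 + s) ^ 2 / s) ^ 2 := by
          gcongr
          · norm_num
          · nlinarith
      _ = E ^ 2 := hE2.symm
  have := abs_le_of_sq_le_sq hcs hE0
  linarith [(abs_le.1 this).2, mul_le_mul_of_nonneg_left ha hs.le]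

/-- The Blackwell-inspired strategy guarantees
`‖φ̄_t‖_∞ ≤ Δ + √(2/t)·Δ²/(Δ−1)`; equivalently, the accumulated loss is at most
`t·Δ + √(2t)·Δ²/(Δ−1)`. -/
theorem blackwell_strategy_bound (Δ : ℝ) (hΔ : Δ ∈ Set.Ioo (1 : ℝ) 2)
    (t : ℕ) (ht : 1 ≤ t) (q : ℕ → ℝ × ℝ)
    (hq : ∀ i, 0 ≤ (q i).1 ∧ 0 ≤ (q i).2 ∧ (q i).1 + (q i).2 = 1) :
    max |(phibar Δ q t).1| |(phibar Δ q t).2| ≤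
      Δ + Real.sqrt (2 / t) * (Δ ^ 2 / (Δ - 1)) ∧
    max (∑ i : Fin t, (q i.1).1 / (select Δ (phibar Δ q i.1)).1)
        (∑ i : Fin t, (q i.1).2 / (select Δ (phibar Δ q i.1)).2) ≤
      t * Δ + Real.sqrt (2 * t) * (Δ ^ 2 / (Δ - 1)) := by
  obtain ⟨h1, h2⟩ := hΔ
  obtain ⟨x1, x2, u, v, hu, hv, hd⟩ := approach_invariant Δ h1 h2 q hq t
  have hs : 0 < Δ - 1 := by linarith
  have hT : (0 : ℝ) < t := by exact_mod_cast ht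
  have b2 := coord_le (Δ - 1) t _ _ u v hs hT (by linarith) hu hd
  have b1 := coord_le (Δ - 1) t ((phibar Δ q t).2 - 1) ((phibar Δ q t).1 - 1) v u hs hT
    (by linarith) (by linarith) (by rw [add_comm (_ ^ 2)]; exact hd)
  rw [add_sub_cancel] at b1 b2
  have c1 : (phibar Δ q t).1 ≤ Δ + Real.sqrt (2 / t) * (Δ ^ 2 / (Δ - 1)) := by linarith
  have c2 : (phibar Δ q t).2 ≤ Δ + Real.sqrt (2 / t) * (Δ ^ 2 / (Δ - 1)) := by linarith
  have hsq : (t : ℝ) * Real.sqrt (2 / t) = Real.sqrt (2 * t) := by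
    have : (2 * t : ℝ) = t ^ 2 * (2 / t) := by field_simp
    rw [this, Real.sqrt_mul (by positivity), Real.sqrt_sq hT.le]
  have hsum : (t : ℝ) * (Δ + Real.sqrt (2 / t) * (Δ ^ 2 / (Δ - 1))) =
      t * Δ + Real.sqrt (2 * t) * (Δ ^ 2 / (Δ - 1)) := by
    rw [← hsq]; ring
  obtain ⟨s1, s2⟩ := mul_phibar_eq_sum Δ q t
  refine ⟨?_, ?_⟩
  · rw [abs_of_nonneg x1, abs_of_nonneg x2]
    exact max_le c1 c2
  · rw [s1, s2, ← hsum]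
    exact max_le (mul_le_mul_of_nonneg_left c1 hT.le) (mul_le_mul_of_nonneg_left c2 hT.le)
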